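/- Let k be a field and B a k-linear rigid monoidal category, and let U, V, U', V' be objects of B. For each object X of B define the k-linear map i_X : Hom_B(U ⊗ X, V) ⊗_k Hom_B(U', X ⊗ V') → Hom_B(U ⊗ U', V ⊗ V') by i_X(f ⊗ g) = (f ⊗ id_{V'}) ∘ α ∘ (id_U ⊗ g), where α is the appropriate associator. Then (Hom_B(U ⊗ U', V ⊗ V'), i) is a coend of the functor (X, X') ↦ Hom_B(U ⊗ X, V) ⊗_k Hom_B(U', X' ⊗ V') over B; that is: (1) the family (i_X) is dinatural in X, i.e., for every morphism u : X → X', every f : U ⊗ X' → V and every g : U' → X ⊗ V' one has i_X(f ∘ (id_U ⊗ u) ⊗ g) = i_{X'}(f ⊗ ((u ⊗ id_{V'}) ∘ g)); and (2) for every k-vector space W and every family of k-bilinear maps φ_X : Hom_B(U ⊗ X, V) × Hom_B(U', X ⊗ V') → W that is dinatural in X, there exists a unique k-linear map Ψ : Hom_B(U ⊗ U', V ⊗ V') → W such that Ψ(i_X(f ⊗ g)) = φ_X(f, g) for all X, f, g. -/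

import Mathlib

open CategoryTheory MonoidalCategory
open scoped TensorProduct

universe w w' v u

section

variable {k : Type u} [Field k] {B : Type v} [Category.{w} B] [Preadditive B] [Linear k B]
  [MonoidalCategory B] [MonoidalPreadditive B] [MonoidalLinear k B]

/-- The `k`-bilinear map `(f, g) ↦ (f ⊗ id_{V'}) ∘ α ∘ (id_U ⊗ g)` from
`Hom(U ⊗ X, V) × Hom(U', X ⊗ V')` to `Hom(U ⊗ U', V ⊗ V')`. -/
noncomputable def coendPairing (U V U' V' X : B) :
    (U ⊗ X ⟶ V) →ₗ[k] (U' ⟶ X ⊗ V') →ₗ[k] (U ⊗ U' ⟶ V ⊗ V') :=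
  LinearMap.mk₂ k (fun f g => (U ◁ g) ≫ (α_ U X V').inv ≫ (f ▷ V'))
    (by intros; simp [MonoidalPreadditive.add_whiskerRight, Preadditive.comp_add])
    (by intros; simp [MonoidalLinear.smul_whiskerRight, Linear.comp_smul])
    (by intros; simp [MonoidalPreadditive.whiskerLeft_add, Preadditive.add_comp])
    (by intros; simp [MonoidalLinear.whiskerLeft_smul, Linear.smul_comp])

/-- The `k`-linear map
`i_X : Hom(U ⊗ X, V) ⊗[k] Hom(U', X ⊗ V') → Hom(U ⊗ U', V ⊗ V')`
with `i_X (f ⊗ g) = (f ⊗ id_{V'}) ∘ α ∘ (id_U ⊗ g)`. -/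
noncomputable def coendMap (U V U' V' X : B) :
    ((U ⊗ X ⟶ V) ⊗[k] (U' ⟶ X ⊗ V')) →ₗ[k] (U ⊗ U' ⟶ V ⊗ V') :=
  TensorProduct.lift (coendPairing U V U' V' X)

end

/-- Pairing with the universal map `U ⊗ (ᘁU ⊗ V) ⟶ V` is transposition. -/
theorem coendPairing_universal {B : Type v} [Category.{w} B] [MonoidalCategory B]
    (U V U' V' Y : B) [ExactPairing Y U] (g : U' ⟶ (Y ⊗ V) ⊗ V') :
    (U ◁ g) ≫ (α_ U (Y ⊗ V) V').inv ≫ ((tensorLeftHomEquiv (Y ⊗ V) Y U V).symm (𝟙 _) ▷ V') =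
      (tensorLeftHomEquiv U' Y U (V ⊗ V')).symm (g ≫ (α_ Y V V').hom) := by
  simp [tensorLeftHomEquiv]

/-- Transposition as a linear map. -/
noncomputable def coendTranspose {k : Type u} [Field k] {B : Type v} [Category.{w} B]
    [Preadditive B] [Linear k B] [MonoidalCategory B]
    [MonoidalPreadditive B] [MonoidalLinear k B]
    (U V U' V' Y : B) [ExactPairing Y U] :
    (U ⊗ U' ⟶ V ⊗ V') →ₗ[k] (U' ⟶ (Y ⊗ V) ⊗ V') where
  toFun h := tensorLeftHomEquiv U' Y U (V ⊗ V') h ≫ (α_ Y V V').inv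
  map_add' := by
    intro a b
    simp [tensorLeftHomEquiv, MonoidalPreadditive.whiskerLeft_add, Preadditive.add_comp,
      Preadditive.comp_add]
  map_smul' := by
    intro a b
    simp [tensorLeftHomEquiv, MonoidalLinear.whiskerLeft_smul, Linear.smul_comp,
      Linear.comp_smul]

/-- Let `k` be a field and `B` a `k`-linear rigid monoidal category, and `U, V, U', V'` objects
of `B`.  Then `Hom(U ⊗ U', V ⊗ V')` together with the family
`i_X : Hom(U ⊗ X, V) ⊗[k] Hom(U', X ⊗ V') → Hom(U ⊗ U', V ⊗ V')`,
`i_X(f ⊗ g) = (f ⊗ id) ∘ α ∘ (id ⊗ g)`, is a coend of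
`(X, X') ↦ Hom(U ⊗ X, V) ⊗[k] Hom(U', X' ⊗ V')`:
(1) the family `i` is dinatural in `X`, and
(2) every dinatural family of `k`-bilinear maps `φ_X` into a `k`-vector space `W` factors
through it via a unique `k`-linear map `Ψ : Hom(U ⊗ U', V ⊗ V') → W`. -/
theorem statement7 {k : Type u} [Field k] {B : Type v} [Category.{w} B]
    [Preadditive B] [Linear k B] [MonoidalCategory B]
    [MonoidalPreadditive B] [MonoidalLinear k B] [RigidCategory B]
    (U V U' V' : B) :
    (∀ (X X' : B) (u : X ⟶ X') (f : U ⊗ X' ⟶ V) (g : U' ⟶ X ⊗ V'),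
      coendMap (k := k) U V U' V' X (((U ◁ u) ≫ f) ⊗ₜ[k] g) =
        coendMap (k := k) U V U' V' X' (f ⊗ₜ[k] (g ≫ (u ▷ V')))) ∧
    (∀ (W : Type w') (_ : AddCommGroup W) (_ : Module k W)
      (φ : ∀ X : B, (U ⊗ X ⟶ V) →ₗ[k] (U' ⟶ X ⊗ V') →ₗ[k] W),
      (∀ (X X' : B) (u : X ⟶ X') (f : U ⊗ X' ⟶ V) (g : U' ⟶ X ⊗ V'),
          φ X ((U ◁ u) ≫ f) g = φ X' f (g ≫ (u ▷ V'))) →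
      ∃! Ψ : (U ⊗ U' ⟶ V ⊗ V') →ₗ[k] W,
        ∀ (X : B) (f : U ⊗ X ⟶ V) (g : U' ⟶ X ⊗ V'),
          Ψ (coendMap (k := k) U V U' V' X (f ⊗ₜ[k] g)) = φ X f g) := by
  have din : ∀ (X X' : B) (u : X ⟶ X') (f : U ⊗ X' ⟶ V) (g : U' ⟶ X ⊗ V'),
      coendMap (k := k) U V U' V' X (((U ◁ u) ≫ f) ⊗ₜ[k] g) =
        coendMap (k := k) U V U' V' X' (f ⊗ₜ[k] (g ≫ (u ▷ V'))) := by
    intro X X' u f g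
    simp [coendMap, coendPairing]
  refine ⟨din, ?_⟩
  intro W _ _ φ hφ
  have key : ∀ g : U' ⟶ ((ᘁU) ⊗ V) ⊗ V', coendMap (k := k) U V U' V' ((ᘁU) ⊗ V)
      ((tensorLeftHomEquiv ((ᘁU) ⊗ V) (ᘁU) U V).symm (𝟙 _) ⊗ₜ[k] g) =
      (tensorLeftHomEquiv U' (ᘁU) U (V ⊗ V')).symm (g ≫ (α_ (ᘁU) V V').hom) := by
    intro g
    rw [← coendPairing_universal]
    simp only [coendMap, coendPairing, TensorProduct.lift.tmul, LinearMap.mk₂_apply]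
  have hf : ∀ (X : B) (f : U ⊗ X ⟶ V), f = U ◁ (tensorLeftHomEquiv X (ᘁU) U V f) ≫
      (tensorLeftHomEquiv ((ᘁU) ⊗ V) (ᘁU) U V).symm (𝟙 _) := by
    intro X f
    rw [← tensorLeftHomEquiv_symm_naturality]
    simp
  refine ⟨(φ ((ᘁU) ⊗ V) ((tensorLeftHomEquiv ((ᘁU) ⊗ V) (ᘁU) U V).symm (𝟙 _))).comp
    (coendTranspose U V U' V' (ᘁU)), ?_, ?_⟩
  · intro X f g
    rw [hf X f, din, hφ, key]
    simp [coendTranspose]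
  · intro Ψ hΨ
    ext h
    have h1 := hΨ _ ((tensorLeftHomEquiv ((ᘁU) ⊗ V) (ᘁU) U V).symm (𝟙 _))
      (coendTranspose (k := k) U V U' V' (ᘁU) h)
    rw [key] at h1
    rw [LinearMap.comp_apply, ← h1]
    simp [coendTranspose]
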